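/- Let k ≥ 1 be a fixed integer and set δ = 1 if k is odd and δ = 2 if k is even. For n ≥ 0 define T_k(n) = Σ_{m∈P(n)} B(m). Then there exist real constants A, B, C such that for every n > k + δ − 2 one has T_k(n) = (A·n + B)·2^n + C·(−1)^n. -/

import Mathlib

/-- The number of parts of a composition that are even and strictly greater than `k`. -/
def Bstat (k : ℕ) {n : ℕ} (m : Composition n) : ℕ :=
  m.blocks.countP fun j => decide (Even j ∧ k < j)

/-- `Tk k n` is the total number of occurrences of even parts strictly greater
than `k` among all compositions of `n`. -/
def Tk (k n : ℕ) : ℕ := ∑ m : Composition n, Bstat k m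

/-!
Let `C` be the generating function of compositions, and `T` that of the total weight of the parts,
a part `j` having weight `w j` and `W = ∑_{j ≥ 1} w j X ^ j`. Splitting off the first part gives
`C = 1 + X / (1 - X) * C` and `T = W * C + X / (1 - X) * T`, hence
`(1 - 2 * X) ^ 2 * T = (1 - X) ^ 2 * W`. The even integers greater than `k` are the progression
`k + δ, k + δ + 2, …`, for which `(1 - X ^ 2) * W = X ^ (k + δ)`. Therefore
`T = X ^ (k + δ - 1) * (X * (1 - X) / ((1 + X) * (1 - 2 * X) ^ 2))`. The last factor is a proper
fraction, so all its coefficients are given by its partial fraction decomposition, which is why the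
formula for `T` already holds at `n = k + δ - 1`.
-/

open Finset hiding mk
open PowerSeries

theorem sum_composition_succ {M : Type*} [AddCommMonoid M] (f : List ℕ → M) (n : ℕ) :
    ∑ m : Composition (n + 1), f m.blocks =
      ∑ p ∈ antidiagonal n, ∑ m : Composition p.2, f ((p.1 + 1) :: m.blocks) := by
  rw [sum_sigma']
  symm
  refine sum_bij (fun x hx ↦ ⟨(x.1.1 + 1) :: x.2.blocks, ?pos, ?sum⟩) (fun _ _ ↦ mem_univ _)
    ?inj ?surj (fun _ _ ↦ rfl)
  case pos =>
    intro i hi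
    rcases List.mem_cons.1 hi with rfl | hi
    exacts [Nat.succ_pos _, x.2.blocks_pos hi]
  case sum =>
    have hx : x.1.1 + x.1.2 = n := by simpa using hx
    rw [List.sum_cons, x.2.blocks_sum]
    lia
  case inj =>
    rintro ⟨⟨i, j⟩, a⟩ hi ⟨⟨i', j'⟩, b⟩ hj h
    simp only [Composition.mk.injEq, List.cons.injEq, Nat.add_right_cancel_iff] at h
    obtain ⟨rfl, hab⟩ := h
    obtain rfl : j = j' := a.blocks_sum.symm.trans (hab ▸ b.blocks_sum)
    rw [Composition.ext hab]
  case surj =>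
    rintro ⟨_ | ⟨a, l⟩, hpos, hsum⟩ -
    · simp at hsum
    · have ha : 0 < a := hpos List.mem_cons_self
      rw [List.sum_cons] at hsum
      refine ⟨⟨(a - 1, l.sum), l, fun hi ↦ hpos (List.mem_cons_of_mem _ hi), rfl⟩, ?_, ?_⟩
      · simp only [mem_sigma, HasAntidiagonal.mem_antidiagonal, mem_univ, and_true]
        lia
      · simp only [Nat.sub_add_cancel ha]

section GeneratingFunctions

/-- The generating function of single parts, `∑_{j ≥ 1} w j X ^ j`. The value `w 0` is ignored,
since a part is positive. -/
noncomputable def partSeries {R : Type*} [Semiring R] (w : ℕ → R) : R⟦X⟧ :=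
  X * mk fun i ↦ w (i + 1)

/-- The generating function of the number of compositions. -/
noncomputable def compositionSeries (R : Type*) [Semiring R] : R⟦X⟧ :=
  mk fun n ↦ (Fintype.card (Composition n) : R)

/-- The generating function of the total weight `∑ w j` of all parts `j` of all compositions
of `n`. With `w` the indicator function of a set, it counts occurrences of parts in that set. -/
noncomputable def totalWeightSeries {R : Type*} [Semiring R] (w : ℕ → R) : R⟦X⟧ :=
  mk fun n ↦ ∑ m : Composition n, (m.blocks.map w).sum

section Semiring

variable {R : Type*} [Semiring R]

theorem coeff_succ_partSeries_mul (w : ℕ → R) (φ : R⟦X⟧) (n : ℕ) :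
    coeff (n + 1) (partSeries w * φ) = ∑ p ∈ antidiagonal n, w (p.1 + 1) * coeff p.2 φ := by
  rw [partSeries, mul_assoc, coeff_succ_X_mul, coeff_mul]
  simp only [coeff_mk]

theorem constantCoeff_partSeries (w : ℕ → R) : constantCoeff (partSeries w) = 0 := by
  simp [partSeries]

theorem compositionSeries_eq_one_add_partSeries_mul :
    compositionSeries R = 1 + partSeries 1 * compositionSeries R := by
  ext (_ | n)
  · simp [compositionSeries, constantCoeff_partSeries, composition_card]
  · have h := sum_composition_succ (fun _ ↦ (1 : R)) n
    simpa [coeff_succ_partSeries_mul, compositionSeries, coeff_one] using h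

theorem totalWeightSeries_eq_partSeries_mul_add (w : ℕ → R) :
    totalWeightSeries w =
      partSeries w * compositionSeries R + partSeries 1 * totalWeightSeries w := by
  ext (_ | n)
  · have blocks_nil (m : Composition 0) : m.blocks = [] := m.blocks_eq_nil.2 rfl
    simp [totalWeightSeries, constantCoeff_partSeries, blocks_nil]
  · have h := sum_composition_succ (fun l ↦ (l.map w).sum) n
    simpa [coeff_succ_partSeries_mul, compositionSeries, totalWeightSeries, sum_add_distrib,
      (Nat.cast_commute _ _).eq] using h

end Semiring

theorem partSeries_indicator_progression_mul {R : Type*} [Ring R] (d : ℕ) {s : ℕ} (hs : 0 < s) :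
    partSeries (Set.indicator (Set.range fun i ↦ d + 1 + s * i) (1 : ℕ → R)) * (1 - X ^ s) =
      X ^ (d + 1) := by
  classical
  set S := Set.range fun i ↦ d + 1 + s * i
  have not_shifted_mem (n : ℕ) (hn : n = d) : ¬(s ≤ n ∧ n - s + 1 ∈ S) := by
    rintro ⟨hle, i, hi : d + 1 + s * i = n - s + 1⟩
    lia
  have succ_mem_iff (n : ℕ) : n + 1 ∈ S ↔ n = d ∨ s ≤ n ∧ n - s + 1 ∈ S := by
    simp only [S, Set.mem_range]
    rw [← Nat.or_exists_add_one, ← exists_and_left]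
    refine or_congr (by lia) (exists_congr fun i ↦ ?_)
    rw [Nat.mul_succ]
    lia
  rw [partSeries, mul_assoc, pow_succ']
  congr 1
  ext n
  simp only [mul_sub, mul_one, map_sub, coeff_mul_X_pow', coeff_mk, coeff_X_pow,
    Set.indicator_apply, Pi.one_apply, ← ite_and]
  by_cases hn : n = d
  · rw [if_pos ((succ_mem_iff n).2 (.inl hn)), if_neg (not_shifted_mem n hn), if_pos hn, sub_zero]
  · simp only [succ_mem_iff n, hn, false_or, sub_self, if_false]

section CommRing

variable {R : Type*} [CommRing R]

theorem partSeries_one_mul_one_sub_X : partSeries (1 : ℕ → R) * (1 - X) = X := by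
  rw [partSeries, mul_assoc]
  exact (congrArg (X * ·) (mk_one_mul_one_sub_eq_one R)).trans (mul_one X)

theorem one_sub_two_X_mul_compositionSeries :
    (1 - 2 * X) * compositionSeries R = 1 - X := by
  linear_combination (1 - X) * compositionSeries_eq_one_add_partSeries_mul (R := R) +
    compositionSeries R * partSeries_one_mul_one_sub_X (R := R)

theorem one_sub_two_X_sq_mul_totalWeightSeries (w : ℕ → R) :
    (1 - 2 * X) ^ 2 * totalWeightSeries w = (1 - X) ^ 2 * partSeries w := by
  have linear :
      (1 - 2 * X) * totalWeightSeries w = (1 - X) * partSeries w * compositionSeries R := by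
    linear_combination (1 - X) * totalWeightSeries_eq_partSeries_mul_add w +
      totalWeightSeries w * partSeries_one_mul_one_sub_X (R := R)
  linear_combination (1 - 2 * X) * linear +
    (1 - X) * partSeries w * one_sub_two_X_mul_compositionSeries (R := R)

theorem one_add_X_mul_one_sub_two_X_sq_mul_totalWeightSeries_progression
    (d : ℕ) :
    (1 + X) * (1 - 2 * X) ^ 2 *
      totalWeightSeries (Set.indicator (Set.range fun i ↦ d + 1 + 2 * i) (1 : ℕ → R)) =
      X ^ d * (X * (1 - X)) := by
  set w := Set.indicator (Set.range fun i ↦ d + 1 + 2 * i) (1 : ℕ → R)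
  have hw : partSeries w * (1 - X ^ 2) = X ^ (d + 1) :=
    partSeries_indicator_progression_mul d two_pos
  have hT := one_sub_two_X_sq_mul_totalWeightSeries w
  linear_combination (1 + X) * hT + (1 - X) * hw

end CommRing

end GeneratingFunctions

section ClosedForm

variable {K : Type*} [Field K]

theorem one_add_X_mul_one_sub_two_X_sq_mul_mk_closedForm [CharZero K] :
    (1 + X) * (1 - 2 * X) ^ 2 *
      (mk fun n ↦ (1 / 6 * n + 2 / 9) * 2 ^ n + -2 / 9 * (-1) ^ n : K⟦X⟧) = X * (1 - X) := by
  set φ : K⟦X⟧ := mk fun n ↦ (1 / 6 * n + 2 / 9) * 2 ^ n + -2 / 9 * (-1) ^ n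
  have expand : (1 + X) * (1 - 2 * X) ^ 2 * φ = φ - C 3 * (X * φ) + C 4 * (X * (X * (X * φ))) := by
    simp only [map_ofNat]
    ring
  rw [expand, mul_sub, mul_one]
  ext (_ | _ | _ | n) <;>
    simp only [φ, map_add, map_sub, coeff_C_mul, coeff_zero_X_mul, coeff_succ_X_mul, coeff_mk,
      coeff_X, Nat.cast_add, Nat.cast_one, Nat.cast_zero, Nat.add_eq_right, Nat.add_eq_zero_iff,
      Nat.reduceEqDiff, one_ne_zero, zero_ne_one, and_false, if_false, if_true] <;>
    ring

theorem coeff_totalWeightSeries_indicator_progression_two [CharZero K] (d n : ℕ) :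
    coeff (n + d)
      (totalWeightSeries (Set.indicator (Set.range fun i ↦ d + 1 + 2 * i) (1 : ℕ → K))) =
      (1 / 6 * n + 2 / 9) * 2 ^ n + -2 / 9 * (-1) ^ n := by
  have denominator_ne_zero : (1 + X) * (1 - 2 * X) ^ 2 ≠ (0 : K⟦X⟧) := by
    intro h
    simpa using congrArg constantCoeff h
  have series_eq : totalWeightSeries (Set.indicator (Set.range fun i ↦ d + 1 + 2 * i) 1) =
      X ^ d * (mk fun n ↦ (1 / 6 * n + 2 / 9) * 2 ^ n + -2 / 9 * (-1) ^ n : K⟦X⟧) := by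
    apply mul_left_cancel₀ denominator_ne_zero
    rw [one_add_X_mul_one_sub_two_X_sq_mul_totalWeightSeries_progression,
      mul_left_comm ((1 + X) * (1 - 2 * X) ^ 2),
      one_add_X_mul_one_sub_two_X_sq_mul_mk_closedForm]
  rw [series_eq, coeff_X_pow_mul, coeff_mk]

theorem exists_shifted_coefficients (a b c : K) {r s : K} (hr : r ≠ 0) (hs : s ≠ 0) (d : ℕ) :
    ∃ A B C : K, ∀ n : ℕ, (a * n + b) * r ^ n + c * s ^ n =
      (A * (n + d : ℕ) + B) * r ^ (n + d) + C * s ^ (n + d) := by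
  refine ⟨a / r ^ d, (b - a * d) / r ^ d, c / s ^ d, fun n ↦ ?_⟩
  rw [pow_add, pow_add]
  push_cast
  field_simp
  ring

end ClosedForm

theorem natCast_countP_eq_sum_map_indicator {R α : Type*} [Semiring R] (p : α → Prop)
    [DecidablePred p] (l : List α) :
    (l.countP (p ·) : R) = (l.map (Set.indicator {a | p a} 1)).sum := by
  induction l with
  | nil => simp
  | cons a l ih => by_cases h : p a <;> simp [h, ih, add_comm]

theorem coeff_totalWeightSeries_indicator_even_gt {R : Type*} [Semiring R] (k n : ℕ) :
    coeff n (totalWeightSeries (Set.indicator {j | Even j ∧ k < j} (1 : ℕ → R))) = Tk k n := by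
  simp only [totalWeightSeries, coeff_mk, Tk, Bstat, Nat.cast_sum,
    natCast_countP_eq_sum_map_indicator]

theorem setOf_even_and_lt_eq_range (k : ℕ) :
    {j | Even j ∧ k < j} = Set.range fun i ↦ k + (if Odd k then 1 else 2) + 2 * i := by
  ext j
  simp only [Set.mem_ofPred_eq, Set.mem_range]
  constructor
  · rintro ⟨heven, hlt⟩
    refine ⟨(j - k - if Odd k then 1 else 2) / 2, ?_⟩
    grind
  · grind

theorem stmt12 (k : ℕ) (hk : 1 ≤ k) (δ : ℕ) (hδ : δ = if Odd k then 1 else 2) :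
    ∃ A B C : ℝ, ∀ n : ℕ, k + δ - 2 < n →
      (Tk k n : ℝ) = (A * n + B) * 2 ^ n + C * (-1) ^ n := by
  obtain ⟨d, hd⟩ : ∃ d, k + δ = d + 1 := ⟨k + δ - 1, by lia⟩
  obtain ⟨A, B, C, hABC⟩ := exists_shifted_coefficients (1 / 6 : ℝ) (2 / 9) (-2 / 9)
    two_ne_zero (neg_ne_zero.2 one_ne_zero) d
  refine ⟨A, B, C, fun n hn ↦ ?_⟩
  obtain ⟨m, rfl⟩ : ∃ m, n = m + d := ⟨n - d, by lia⟩
  rw [← hABC, ← coeff_totalWeightSeries_indicator_even_gt, setOf_even_and_lt_eq_range, ← hδ, hd,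
    coeff_totalWeightSeries_indicator_progression_two]
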